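/- arXiv:2312.15788 — 4 statements merged into one kernel-verified Lean document; each statement's English description precedes it below -/
import Mathlib

section
/- Let (Ω, ℱ, P) be a probability space with a filtration (ℱ_l)_{l∈ℕ}, and let (Z_l)_{l∈ℕ} be a sequence of nonnegative integrable real random variables adapted to the filtration. Let δ, ε ∈ (0,1) and ζ, M ≥ 0, and suppose the drift condition holds: for every l ≥ 1, E[Z_l ∣ ℱ_{l−1}] ≤ (1−δ)(1−ε)·Z_{l−1} + (1−δ)·ζ + δ·M almost surely. Then the sequence E[min_{k≤l} Z_k] is nonincreasing in l and its limit as l → ∞ is at most (1/ε)·(ζ + δM/(1−δ)). -/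
open MeasureTheory Filter

/-- Running minimum `min_{k ≤ l} Z k ω`. -/
noncomputable def runMin {Ω : Type*} (Z : ℕ → Ω → ℝ) (l : ℕ) (ω : Ω) : ℝ :=
  (Finset.range (l + 1)).inf' (Finset.nonempty_range_iff.mpr (Nat.succ_ne_zero l))
    (fun k => Z k ω)

lemma runMin_succ' {Ω : Type*} (Z : ℕ → Ω → ℝ) (l : ℕ) (ω : Ω) :
    runMin Z (l + 1) ω = min (Z (l + 1) ω) (runMin Z l ω) := by
  unfold runMin
  apply le_antisymm
  · refine le_min (Finset.inf'_le _ (by simp)) ?_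
    refine Finset.le_inf' _ _ fun k hk => Finset.inf'_le (fun k => Z k ω) ?_
    simp only [Finset.mem_range] at hk ⊢
    omega
  · refine Finset.le_inf' _ _ fun k hk => ?_
    rcases Nat.lt_succ_iff_lt_or_eq.mp (Finset.mem_range.mp hk) with h | h
    · exact (min_le_right _ _).trans (Finset.inf'_le (fun k => Z k ω) (by simpa using h))
    · rw [h]; exact min_le_left _ _

lemma runMin_integrable {Ω : Type*} {m0 : MeasurableSpace Ω} {μ : Measure Ω}
    (Z : ℕ → Ω → ℝ) (hint : ∀ l, Integrable (Z l) μ) (l : ℕ) :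
    Integrable (runMin Z l) μ := by
  induction l with
  | zero =>
    have : runMin Z 0 = Z 0 := by
      funext ω
      simp [runMin]
    rw [this]; exact hint 0
  | succ l ih =>
    have : runMin Z (l + 1) = Z (l + 1) ⊓ runMin Z l := by
      funext ω
      exact runMin_succ' Z l ω
    rw [this]; exact (hint _).inf ih

/-- If a nonnegative adapted integrable process satisfies the one-step drift condition
`E[Z_l ∣ ℱ_{l−1}] ≤ (1−δ)(1−ε) Z_{l−1} + (1−δ)ζ + δM` a.s., then `l ↦ E[min_{k≤l} Z_k]`
is nonincreasing and its limit is at most `(1/ε)(ζ + δM/(1−δ))`. -/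
theorem expected_running_min_tendsto_le
    {Ω : Type*} {m0 : MeasurableSpace Ω} {μ : Measure Ω} [IsProbabilityMeasure μ]
    (ℱ : Filtration ℕ m0) (Z : ℕ → Ω → ℝ)
    (hadapted : Adapted ℱ Z)
    (hint : ∀ l, Integrable (Z l) μ)
    (hnonneg : ∀ l ω, 0 ≤ Z l ω)
    (δ ε ζ M : ℝ) (hδ : δ ∈ Set.Ioo (0 : ℝ) 1) (hε : ε ∈ Set.Ioo (0 : ℝ) 1)
    (hζ : 0 ≤ ζ) (hM : 0 ≤ M)
    (hdrift : ∀ l : ℕ, 1 ≤ l →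
      μ[Z l | ℱ (l - 1)] ≤ᵐ[μ]
        fun ω => (1 - δ) * (1 - ε) * Z (l - 1) ω + (1 - δ) * ζ + δ * M) :
    Antitone (fun l => ∫ ω, runMin Z l ω ∂μ) ∧
      ∃ A : ℝ, Tendsto (fun l => ∫ ω, runMin Z l ω ∂μ) atTop (nhds A) ∧
        A ≤ (1 / ε) * (ζ + δ * M / (1 - δ)) := by
  obtain ⟨hδ0, hδ1⟩ := hδ
  obtain ⟨hε0, hε1⟩ := hε
  have hI := runMin_integrable (μ := μ) Z hint
  have hanti : Antitone (fun l => ∫ ω, runMin Z l ω ∂μ) := by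
    refine antitone_nat_of_succ_le fun l => ?_
    refine integral_mono (hI _) (hI _) fun ω => ?_
    rw [runMin_succ']
    exact min_le_right _ _
  refine ⟨hanti, ?_⟩
  have hnn : ∀ l ω, 0 ≤ runMin Z l ω := fun l ω =>
    Finset.le_inf' _ _ fun k _ => hnonneg k ω
  have hbdd : BddBelow (Set.range (fun l => ∫ ω, runMin Z l ω ∂μ)) := by
    refine ⟨0, ?_⟩
    rintro _ ⟨l, rfl⟩
    exact integral_nonneg (hnn l)
  have hlim := tendsto_atTop_ciInf hanti hbdd
  refine ⟨_, hlim, ?_⟩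
  set C : ℝ := (1 / ε) * (ζ + δ * M / (1 - δ)) with hC
  have h1δ : 0 < 1 - δ := by linarith
  have h1ε : 0 < 1 - ε := by linarith
  have hC0 : 0 ≤ C := by positivity
  have hb : (1 - δ) * ζ + δ * M = ε * (1 - δ) * C := by
    rw [hC]; field_simp
  set a : ℝ := (1 - δ) * (1 - ε) with ha
  have ha0 : 0 ≤ a := by positivity
  have ha1 : a < 1 := by nlinarith
  have hstep : ∀ l, ∫ ω, Z (l + 1) ω ∂μ ≤ a * ∫ ω, Z l ω ∂μ + ε * (1 - δ) * C := by
    intro l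
    have h := hdrift (l + 1) (by omega)
    simp only [Nat.add_sub_cancel] at h
    have h2 := integral_mono_ae integrable_condExp
      ((((hint l).const_mul a).add (integrable_const ((1 - δ) * ζ))).add
        (integrable_const (δ * M))) h
    rw [integral_condExp (ℱ.le l)] at h2
    have h3 : ∫ ω, (a * Z l ω + (1 - δ) * ζ + δ * M) ∂μ
        = a * ∫ ω, Z l ω ∂μ + ε * (1 - δ) * C := by
      have h4 : Integrable (fun ω => a * Z l ω + (1 - δ) * ζ) μ :=
        ((hint l).const_mul a).add (integrable_const _)
      rw [integral_add h4 (integrable_const _),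
        integral_add ((hint l).const_mul a) (integrable_const _), integral_const_mul]
      simp only [integral_const, probReal_univ, one_smul]
      linarith
    exact h2.trans h3.le
  have hind : ∀ l, ∫ ω, Z l ω ∂μ ≤ a ^ l * ∫ ω, Z 0 ω ∂μ + C := by
    intro l
    induction l with
    | zero => simpa using hC0
    | succ l ih =>
      have h1 := mul_le_mul_of_nonneg_left ih ha0
      have h2 : a * C + ε * (1 - δ) * C ≤ C := by
        have : a * C + ε * (1 - δ) * C = C - δ * C := by rw [ha]; ring
        have := mul_nonneg hδ0.le hC0
        linarith
      have h3 := hstep l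
      rw [pow_succ]
      linarith
  have hT : Tendsto (fun l => a ^ l * ∫ ω, Z 0 ω ∂μ + C) atTop (nhds C) := by
    simpa using ((tendsto_pow_atTop_nhds_zero_of_lt_one ha0 ha1).mul_const
      (∫ ω, Z 0 ω ∂μ)).add_const C
  refine le_of_tendsto_of_tendsto' hlim hT fun l => le_trans ?_ (hind l)
  exact integral_mono (hI l) (hint l) fun ω => Finset.inf'_le (fun k => Z k ω) (by simp)
end

section
/- Let (Ω, ℱ, P) be a probability space with a filtration (ℱ_l)_{l∈ℕ}, and let (Z_l)_{l∈ℕ} be a sequence of nonnegative integrable real random variables adapted to the filtration. Let δ, ε ∈ (0,1) and ζ, M ≥ 0, and suppose the drift condition holds: for every l ≥ 1, E[Z_l ∣ ℱ_{l−1}] ≤ (1−δ)(1−ε)·Z_{l−1} + (1−δ)·ζ + δ·M almost surely. Then almost surely inf_{l∈ℕ} Z_l ≤ (1/ε)·(ζ + δM/(1−δ)); equivalently, the running minimum min_{k≤l} Z_k converges almost surely to a value at most (1/ε)·(ζ + δM/(1−δ)). -/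
open MeasureTheory Filter

/-- If a nonnegative adapted integrable process satisfies the one-step drift condition
`E[Z_l ∣ ℱ_{l−1}] ≤ (1−δ)(1−ε) Z_{l−1} + (1−δ)ζ + δM` a.s., then almost surely
`inf_l Z_l ≤ (1/ε)(ζ + δM/(1−δ))`; equivalently the running minimum converges a.s.
to a value at most this threshold. -/
theorem inf_le_near_optimal_region_ae
    {Ω : Type*} {m0 : MeasurableSpace Ω} {μ : Measure Ω} [IsProbabilityMeasure μ]
    (ℱ : Filtration ℕ m0) (Z : ℕ → Ω → ℝ)
    (hadapted : Adapted ℱ Z)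
    (hint : ∀ l, Integrable (Z l) μ)
    (hnonneg : ∀ l ω, 0 ≤ Z l ω)
    (δ ε ζ M : ℝ) (hδ : δ ∈ Set.Ioo (0 : ℝ) 1) (hε : ε ∈ Set.Ioo (0 : ℝ) 1)
    (hζ : 0 ≤ ζ) (hM : 0 ≤ M)
    (hdrift : ∀ l : ℕ, 1 ≤ l →
      μ[Z l | ℱ (l - 1)] ≤ᵐ[μ]
        fun ω => (1 - δ) * (1 - ε) * Z (l - 1) ω + (1 - δ) * ζ + δ * M) :
    ∀ᵐ ω ∂μ, (⨅ l : ℕ, Z l ω) ≤ (1 / ε) * (ζ + δ * M / (1 - δ)) ∧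
      Tendsto (fun l => runMin Z l ω) atTop (nhds (⨅ l : ℕ, Z l ω)) := by
  obtain ⟨hδ0, hδ1⟩ := hδ
  obtain ⟨hε0, hε1⟩ := hε
  have hd : 0 < 1 - δ := by linarith
  set η : ℝ := (1 / ε) * (ζ + δ * M / (1 - δ)) with hη
  have hη0 : 0 ≤ η := by positivity
  have hb : (1 - δ) * ζ + δ * M = (1 - δ) * ε * η := by
    rw [hη]; field_simp
  have hbdd : ∀ ω, BddBelow (Set.range fun l => Z l ω) := fun ω =>
    ⟨0, by rintro _ ⟨l, rfl⟩; exact hnonneg l ω⟩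
  have hmeas : ∀ l, Measurable (Z l) := fun l => (hadapted l).mono (ℱ.le l) le_rfl
  let A : ℕ → Set Ω := fun n => ⋂ k ∈ Set.Iic n, {ω | η < Z k ω}
  have hAmem : ∀ n ω, ω ∈ A n ↔ ∀ k ≤ n, η < Z k ω := by
    intro n ω; simp [A]
  have hA : ∀ n, MeasurableSet[ℱ n] (A n) := by
    intro n
    refine MeasurableSet.biInter (Set.to_countable _) ?_
    intro k hk
    exact ℱ.mono hk _ (measurableSet_lt measurable_const (hadapted k))
  have hA0 : ∀ n, MeasurableSet (A n) := fun n => ℱ.le n _ (hA n)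
  let u : ℕ → ℝ := fun n => ∫ ω in A n, Z n ω ∂μ
  have hstep : ∀ n, u (n + 1) ≤ (1 - δ) * u n := by
    intro n
    have h1 : u (n + 1) ≤ ∫ ω in A n, Z (n + 1) ω ∂μ := by
      refine setIntegral_mono_set (hint _).integrableOn
        (Eventually.of_forall fun ω => hnonneg _ ω) (Eventually.of_forall ?_)
      intro ω hω
      exact (hAmem n ω).2 fun k hk => (hAmem (n + 1) ω).1 hω k (by omega)
    have h2 : ∫ ω in A n, Z (n + 1) ω ∂μ = ∫ ω in A n, (μ[Z (n + 1) | ℱ n]) ω ∂μ :=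
      (setIntegral_condExp (ℱ.le n) (hint _) (hA n)).symm
    have h3 : ∫ ω in A n, (μ[Z (n + 1) | ℱ n]) ω ∂μ ≤ ∫ ω in A n, (1 - δ) * Z n ω ∂μ := by
      refine setIntegral_mono_on_ae integrable_condExp.integrableOn
        ((hint n).const_mul _).integrableOn (hA0 n) ?_
      have h4 := hdrift (n + 1) (by omega)
      simp only [Nat.add_sub_cancel] at h4
      filter_upwards [h4] with ω h5 hω
      have h6 := (hAmem n ω).1 hω n le_rfl
      have h7 : (1 - δ) * ε * η ≤ (1 - δ) * ε * Z n ω := by gcongr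
      nlinarith
    rw [integral_const_mul] at h3
    exact h1.trans (h2.le.trans h3)
  have hu : ∀ n, u n ≤ (1 - δ) ^ n * u 0 := by
    intro n
    induction n with
    | zero => simp
    | succ n ih =>
      calc u (n + 1) ≤ (1 - δ) * u n := hstep n
        _ ≤ (1 - δ) * ((1 - δ) ^ n * u 0) := by gcongr
        _ = _ := by ring
  let I : Set Ω := ⋂ n, A n
  have hI : MeasurableSet I := MeasurableSet.iInter hA0
  let g : Ω → ℝ := I.indicator fun ω => ⨅ l, Z l ω
  have hg0 : ∀ ω, 0 ≤ g ω := fun ω =>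
    Set.indicator_nonneg (fun ω _ => le_ciInf fun l => hnonneg l ω) ω
  have hgm : Measurable g := (Measurable.iInf hmeas).indicator hI
  have hgle : ∀ n ω, g ω ≤ (A n).indicator (Z n) ω := by
    intro n ω
    by_cases hω : ω ∈ I
    · have hωn : ω ∈ A n := Set.mem_iInter.1 hω n
      simp only [g, Set.indicator_of_mem hω, Set.indicator_of_mem hωn]
      exact ciInf_le (hbdd ω) n
    · simp only [g, Set.indicator_of_notMem hω]
      exact Set.indicator_nonneg (fun ω _ => hnonneg n ω) ω
  have hgint : Integrable g μ := by
    refine ((hint 0).indicator (hA0 0)).mono' hgm.aestronglyMeasurable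
      (Eventually.of_forall fun ω => ?_)
    rw [Real.norm_of_nonneg (hg0 ω)]
    exact hgle 0 ω
  have hgu : ∀ n, ∫ ω, g ω ∂μ ≤ (1 - δ) ^ n * u 0 := by
    intro n
    refine le_trans ?_ (hu n)
    change _ ≤ ∫ ω in A n, Z n ω ∂μ
    rw [← integral_indicator (hA0 n)]
    exact integral_mono hgint ((hint n).indicator (hA0 n)) (hgle n)
  have hlim : Tendsto (fun n : ℕ => (1 - δ) ^ n * u 0) atTop (nhds 0) := by
    simpa using (tendsto_pow_atTop_nhds_zero_of_lt_one hd.le (by linarith)).mul_const (u 0)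
  have hgz : ∫ ω, g ω ∂μ = 0 :=
    le_antisymm (ge_of_tendsto' hlim hgu) (integral_nonneg hg0)
  have hgae := (integral_eq_zero_iff_of_nonneg hg0 hgint).1 hgz
  filter_upwards [hgae] with ω hω
  constructor
  · by_cases hωI : ω ∈ I
    · simp only [g, Set.indicator_of_mem hωI, Pi.zero_apply] at hω
      rw [hω]; exact hη0
    · by_contra hcon
      apply hωI
      refine Set.mem_iInter.2 fun n => (hAmem n ω).2 fun k _ => ?_
      exact lt_of_lt_of_le (not_le.1 hcon) (ciInf_le (hbdd ω) k)
  · have hle : ∀ l, (⨅ k, Z k ω) ≤ runMin Z l ω := fun l =>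
      Finset.le_inf' _ _ fun k _ => ciInf_le (hbdd ω) k
    have hrle : ∀ l k, k ≤ l → runMin Z l ω ≤ Z k ω := fun l k hk =>
      Finset.inf'_le (fun k => Z k ω) (Finset.mem_range.2 (by omega))
    refine tendsto_order.2 ⟨fun a ha => Eventually.of_forall fun l => ha.trans_le (hle l), ?_⟩
    intro a ha
    obtain ⟨k, hk⟩ := exists_lt_of_ciInf_lt ha
    filter_upwards [eventually_ge_atTop k] with l hl
    exact (hrle l k hl).trans_lt hk
end

section
/- Let (Ω, ℱ, P) be a probability space with a filtration (ℱ_l)_{l∈ℕ}, and let (Z_l)_{l∈ℕ} be a sequence of nonnegative integrable real random variables adapted to the filtration satisfying, for every l ≥ 1, E[Z_l ∣ ℱ_{l−1}] ≤ (1−δ)(1−ε)·Z_{l−1} + (1−δ)·ζ + δ·M almost surely, where δ, ε ∈ (0,1) and ζ, M ≥ 0. Set η = (1/ε)(ζ + δM/(1−δ)), Z_l^best = min_{k≤l} Z_k, α_l = Z_l·1{Z_l^best > η}, and β_l = (ε·Z_l − ζ − δM/(1−δ))·1{Z_l^best > η}. Then α_l ≥ 0 and β_l ≥ 0 for every l,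 and for every l ≥ 1, E[α_l ∣ ℱ_{l−1}] ≤ (1−δ)·(α_{l−1} − β_{l−1}) almost surely. -/
open MeasureTheory Filter

/-- Stopped-process supermartingale construction: with `η = (1/ε)(ζ + δM/(1−δ))`,
`α_l = Z_l·1{Z_l^best > η}` and `β_l = (εZ_l − ζ − δM/(1−δ))·1{Z_l^best > η}`, both
processes are nonnegative and `E[α_l ∣ ℱ_{l−1}] ≤ (1−δ)(α_{l−1} − β_{l−1})` a.s. -/
theorem stopped_process_supermartingale
    {Ω : Type*} {m0 : MeasurableSpace Ω} {μ : Measure Ω} [IsProbabilityMeasure μ]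
    (ℱ : Filtration ℕ m0) (Z : ℕ → Ω → ℝ)
    (hadapted : Adapted ℱ Z)
    (hint : ∀ l, Integrable (Z l) μ)
    (hnonneg : ∀ l ω, 0 ≤ Z l ω)
    (δ ε ζ M : ℝ) (hδ : δ ∈ Set.Ioo (0 : ℝ) 1) (hε : ε ∈ Set.Ioo (0 : ℝ) 1)
    (hζ : 0 ≤ ζ) (hM : 0 ≤ M)
    (hdrift : ∀ l : ℕ, 1 ≤ l →
      μ[Z l | ℱ (l - 1)] ≤ᵐ[μ]
        fun ω => (1 - δ) * (1 - ε) * Z (l - 1) ω + (1 - δ) * ζ + δ * M)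
    (η : ℝ) (hη : η = (1 / ε) * (ζ + δ * M / (1 - δ)))
    (α β : ℕ → Ω → ℝ)
    (hα : ∀ l ω, α l ω = Z l ω * (if η < runMin Z l ω then 1 else 0))
    (hβ : ∀ l ω, β l ω =
      (ε * Z l ω - ζ - δ * M / (1 - δ)) * (if η < runMin Z l ω then 1 else 0)) :
    (∀ l ω, 0 ≤ α l ω) ∧ (∀ l ω, 0 ≤ β l ω) ∧
      ∀ l : ℕ, 1 ≤ l →
        μ[α l | ℱ (l - 1)] ≤ᵐ[μ]
          fun ω => (1 - δ) * (α (l - 1) ω - β (l - 1) ω) := by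
  have h1δ : 0 < 1 - δ := by linarith [hδ.2]
  have hε0 := hε.1
  have hlt : ∀ l ω, η < runMin Z l ω ↔ ∀ k ∈ Finset.range (l + 1), η < Z k ω := by
    intro l ω
    simp only [runMin, Finset.lt_inf'_iff]
  have hεη : ε * η = ζ + δ * M / (1 - δ) := by
    rw [hη]; field_simp
  have hS : ∀ l, MeasurableSet[ℱ l] {ω | η < runMin Z l ω} := by
    intro l
    have : {ω | η < runMin Z l ω} = ⋂ k ∈ Finset.range (l + 1), {ω | η < Z k ω} := by
      ext ω
      simp only [Set.mem_setOf_eq, hlt, Set.mem_iInter]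
    rw [this]
    refine Finset.measurableSet_biInter _ fun k hk => ?_
    have hkl : k ≤ l := Nat.lt_succ_iff.mp (Finset.mem_range.mp hk)
    have hm : Measurable[ℱ k] (Z k) := hadapted k
    exact ℱ.mono hkl _ (hm measurableSet_Ioi)
  have hαi : ∀ l, α l = {ω | η < runMin Z l ω}.indicator (Z l) := by
    intro l
    ext ω
    rw [hα]
    by_cases h : η < runMin Z l ω <;> simp [h]
  refine ⟨fun l ω => ?_, fun l ω => ?_, fun l hl => ?_⟩
  · rw [hα]
    exact mul_nonneg (hnonneg l ω) (by split_ifs <;> norm_num)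
  · rw [hβ]
    split_ifs with h
    · have := (hlt l ω).1 h l (by simp)
      nlinarith
    · simp
  · obtain ⟨n, rfl⟩ : ∃ n, l = n + 1 := ⟨l - 1, by omega⟩
    have hd := hdrift (n + 1) hl
    simp only [Nat.add_sub_cancel] at hd ⊢
    have hle : α (n + 1) ≤ {ω | η < runMin Z n ω}.indicator (Z (n + 1)) := by
      intro ω
      rw [hα]
      by_cases h : η < runMin Z n ω
      · simp only [Set.indicator, Set.mem_setOf_eq, h, if_true]
        have := hnonneg (n + 1) ω
        split_ifs <;> simp [this]
      · have h' : ¬ η < runMin Z (n + 1) ω := by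
          intro h2
          apply h
          rw [hlt] at h2 ⊢
          intro k hk
          exact h2 k (by simp at hk ⊢; omega)
        simp [h, h']
    have hi1 : Integrable (α (n + 1)) μ := by
      rw [hαi]
      exact (hint _).indicator (ℱ.le _ _ (hS _))
    have hmono := condExp_mono (m := ℱ n) hi1
      ((hint (n + 1)).indicator (ℱ.le _ _ (hS n))) (Eventually.of_forall hle)
    have hind := condExp_indicator (hint (n + 1)) (hS n)
    filter_upwards [hd, hmono, hind] with ω h1 h2 h3
    rw [h3] at h2
    refine h2.trans ?_
    rw [hα, hβ]
    by_cases h : η < runMin Z n ω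
    · simp only [Set.indicator, Set.mem_setOf_eq, h, if_true, mul_one]
      refine h1.trans (le_of_eq ?_)
      field_simp
      ring
    · simp [h]
end

section
/- Let (Ω, ℱ, P) be a probability space with a filtration (ℱ_l)_{l∈ℕ}, and let (Z_l)_{l∈ℕ} be a sequence of nonnegative integrable real random variables adapted to the filtration. Let δ, ε ∈ (0,1), ζ, M ≥ 0, and K ≥ 0, and suppose the shifted drift condition holds: for every l ≥ 1, E[Z_l ∣ ℱ_{l−1}] ≤ (1−δ)(1−ε)·Z_{l−1} + (1−δ)·(ζ + 2K) + δ·M almost surely. Then the sequence E[min_{k≤l} Z_k] is nonincreasing in l and its limit as l → ∞ is at most (1/ε)·(ζ + 2K + δM/(1−δ)). -/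
open MeasureTheory Filter

/-- Convergence under distribution shift: if the shifted drift condition
`E[Z_l ∣ ℱ_{l−1}] ≤ (1−δ)(1−ε) Z_{l−1} + (1−δ)(ζ + 2K) + δM` holds a.s., then
`l ↦ E[min_{k≤l} Z_k]` is nonincreasing and its limit is at most
`(1/ε)(ζ + 2K + δM/(1−δ))`. -/
theorem expected_running_min_tendsto_le_ood
    {Ω : Type*} {m0 : MeasurableSpace Ω} {μ : Measure Ω} [IsProbabilityMeasure μ]
    (ℱ : Filtration ℕ m0) (Z : ℕ → Ω → ℝ)
    (hadapted : Adapted ℱ Z)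
    (hint : ∀ l, Integrable (Z l) μ)
    (hnonneg : ∀ l ω, 0 ≤ Z l ω)
    (δ ε ζ M K : ℝ) (hδ : δ ∈ Set.Ioo (0 : ℝ) 1) (hε : ε ∈ Set.Ioo (0 : ℝ) 1)
    (hζ : 0 ≤ ζ) (hM : 0 ≤ M) (hK : 0 ≤ K)
    (hdrift : ∀ l : ℕ, 1 ≤ l →
      μ[Z l | ℱ (l - 1)] ≤ᵐ[μ]
        fun ω => (1 - δ) * (1 - ε) * Z (l - 1) ω + (1 - δ) * (ζ + 2 * K) + δ * M) :
    Antitone (fun l => ∫ ω, runMin Z l ω ∂μ) ∧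
      ∃ A : ℝ, Tendsto (fun l => ∫ ω, runMin Z l ω ∂μ) atTop (nhds A) ∧
        A ≤ (1 / ε) * (ζ + 2 * K + δ * M / (1 - δ)) := by
  obtain ⟨hδ0, hδ1⟩ := hδ
  obtain ⟨hε0, hε1⟩ := hε
  have hminint : ∀ l, Integrable (fun ω => runMin Z l ω) μ := by
    intro l
    induction l with
    | zero => simpa [runMin] using hint 0
    | succ n ih =>
      have h : (fun ω => runMin Z (n + 1) ω) = (fun ω => Z (n + 1) ω) ⊓ fun ω => runMin Z n ω := by
        funext ω
        have hne : (Finset.range (n + 1)).Nonempty :=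
          Finset.nonempty_range_iff.mpr (Nat.succ_ne_zero n)
        have h := Finset.inf'_insert (b := n + 1) hne (fun k => Z k ω)
        simp only [← Finset.range_add_one] at h
        exact h
      rw [h]
      exact (hint (n + 1)).inf ih
  have hanti : Antitone (fun l => ∫ ω, runMin Z l ω ∂μ) := by
    intro a b hab
    refine integral_mono (hminint b) (hminint a) fun ω => ?_
    exact Finset.inf'_mono _ (Finset.range_mono (by omega)) _
  have hbdd : BddBelow (Set.range (fun l => ∫ ω, runMin Z l ω ∂μ)) := by
    refine ⟨0, ?_⟩
    rintro _ ⟨l, rfl⟩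
    refine integral_nonneg fun ω => ?_
    exact Finset.le_inf' _ _ fun k _ => hnonneg k ω
  refine ⟨hanti, _, tendsto_atTop_ciInf hanti hbdd, ?_⟩
  set B := (1 / ε) * (ζ + 2 * K + δ * M / (1 - δ)) with hB
  have h1 : 0 < 1 - δ := by linarith
  have hB0 : 0 ≤ B := by positivity
  have hBc : (1 - δ) * (ζ + 2 * K) + δ * M = (1 - δ) * ε * B := by
    rw [hB]; field_simp
  have hstep : ∀ n, ∫ ω, Z (n + 1) ω ∂μ ≤
      (1 - δ) * (1 - ε) * ∫ ω, Z n ω ∂μ + ((1 - δ) * (ζ + 2 * K) + δ * M) := by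
    intro n
    have h := hdrift (n + 1) (by omega)
    simp only [Nat.add_sub_cancel] at h
    have hi : Integrable (fun ω => (1 - δ) * (1 - ε) * Z n ω) μ := (hint n).const_mul _
    have h2 := integral_mono_ae integrable_condExp
      ((hi.add (integrable_const ((1 - δ) * (ζ + 2 * K)))).add (integrable_const (δ * M))) h
    rw [integral_condExp (ℱ.le n)] at h2
    refine h2.trans (le_of_eq ?_)
    simp only [Pi.add_apply, add_assoc]
    rw [integral_add hi (integrable_const _), integral_const_mul]
    simp
  have hq0 : 0 ≤ (1 - δ) * (1 - ε) := mul_nonneg h1.le (by linarith)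
  have hq1 : (1 - δ) * (1 - ε) < 1 := by nlinarith
  have hbound : ∀ n, ∫ ω, Z n ω ∂μ ≤ B + ((1 - δ) * (1 - ε)) ^ n * (∫ ω, Z 0 ω ∂μ - B) := by
    intro n
    induction n with
    | zero => simp
    | succ n ih =>
      have h2 := hstep n
      have h3 := mul_le_mul_of_nonneg_left ih hq0
      have h4 : 0 ≤ δ * B := by positivity
      rw [hBc] at h2
      rw [pow_succ]
      linarith
  have hlim : Tendsto (fun n : ℕ => B + ((1 - δ) * (1 - ε)) ^ n * (∫ ω, Z 0 ω ∂μ - B))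
      atTop (nhds B) := by
    simpa using ((tendsto_pow_atTop_nhds_zero_of_lt_one hq0 hq1).mul_const
      (∫ ω, Z 0 ω ∂μ - B)).const_add B
  refine ge_of_tendsto' hlim fun n => ?_
  refine (ciInf_le hbdd n).trans (le_trans ?_ (hbound n))
  refine integral_mono (hminint n) (hint n) fun ω => ?_
  exact Finset.inf'_le _ (Finset.self_mem_range_succ n)
end
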